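/- For all integers n, m with 0 < m < n and all r, s = 1,…,n, the Gram matrix of the scaling functions satisfies ⟨Φ_{n,r}^m, Φ_{n,s}^m⟩ = (π/n)²·Σ_{i=0}^{n−1} ν_{n,i}^m·p_i(x_r^n)·p_i(x_s^n), and moreover ⟨Φ_{n,r}^m, Φ_{n,s}^m⟩ = (π/(3n))·(δ_{r,s} + Σ_{k=1}^{2n} Φ_{n,r}^m(y_k^n)·Φ_{n,s}^m(y_k^n)), where ν_{n,i}^m = 1 if 0 ≤ i ≤ n−m and ν_{n,i}^m = (m² + (n−i)²)/(2m²) if n−m < i < n. -/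

import Mathlib

open Real MeasureTheory Finset

/-- Chebyshev nodes of the first kind: `x_k^n = cos((2k-1)π/(2n))`. -/
noncomputable def chebNode (n k : ℕ) : ℝ :=
  Real.cos ((2 * (k : ℝ) - 1) * Real.pi / (2 * (n : ℝ)))

/-- Orthonormal Chebyshev polynomials of the first kind. -/
noncomputable def chebP (r : ℕ) (x : ℝ) : ℝ :=
  if r = 0 then Real.sqrt (1 / Real.pi)
  else Real.sqrt (2 / Real.pi) * Real.cos ((r : ℝ) * Real.arccos x)

/-- Darboux kernel `K_r(x,y) = Σ_{s=0}^r p_s(x) p_s(y)`. -/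
noncomputable def darboux (r : ℕ) (x y : ℝ) : ℝ :=
  ∑ s ∈ Finset.range (r + 1), chebP s x * chebP s y

/-- de la Vallée Poussin kernel `v_n^m(x,y) = (1/(2m)) Σ_{r=n-m}^{n+m-1} K_r(x,y)`. -/
noncomputable def vpK (n m : ℕ) (x y : ℝ) : ℝ :=
  (1 / (2 * (m : ℝ))) * ∑ r ∈ Finset.Icc (n - m) (n + m - 1), darboux r x y

/-- The Chebyshev weight `w(x) = 1/√(1-x²)`. -/
noncomputable def chebW (x : ℝ) : ℝ := 1 / Real.sqrt (1 - x ^ 2)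

/-- Scaling functions `Φ_{n,k}^m(x) = (π/n) v_n^m(x_k^n, x)`. -/
noncomputable def scal (n m k : ℕ) (x : ℝ) : ℝ :=
  (Real.pi / (n : ℝ)) * vpK n m (chebNode n k) x

/-- The nodes `y_k^n`, `k = 1,…,2n`: the Chebyshev nodes of order `3n` not of order `n`. -/
noncomputable def yNode (n k : ℕ) : ℝ := chebNode (3 * n) (3 * k / 2)

/-- Wavelet functions `ψ_{n,k}^m`. -/
noncomputable def wav (n m k : ℕ) (x : ℝ) : ℝ :=
  (Real.pi / (3 * (n : ℝ))) * vpK (3 * n) m (yNode n k) x -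
    ∑ h ∈ Finset.Icc 1 n,
      scal n m h (yNode n k) * ((Real.pi / (3 * (n : ℝ))) * vpK (3 * n) m (chebNode n h) x)

/-- Filter coefficients `μ_{n,r}^m`. -/
noncomputable def muC (n m r : ℕ) : ℝ :=
  if r ≤ n - m then 1
  else if r < n + m then ((m : ℝ) + (n : ℝ) - (r : ℝ)) / (2 * (m : ℝ))
  else 0

/-- Squared norms `ν_{n,r}^m` of the orthogonal scaling basis. -/
noncomputable def nuC (n m r : ℕ) : ℝ :=
  if r ≤ n - m then 1 else ((m : ℝ) ^ 2 + ((n : ℝ) - (r : ℝ)) ^ 2) / (2 * (m : ℝ) ^ 2)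

/-- Orthogonal scaling basis `Φ_{n,r}^⊥`. -/
noncomputable def scalPerp (n m r : ℕ) (x : ℝ) : ℝ :=
  if r ≤ n - m then chebP r x
  else muC n m r * chebP r x - muC n m (2 * n - r) * chebP (2 * n - r) x

/-- The sup norm on `[-1,1]`. -/
noncomputable def supNorm (f : ℝ → ℝ) : ℝ := ⨆ x : Set.Icc (-1 : ℝ) 1, |f x|

/-- The Lebesgue constant `c_∞ = max_{|x|≤1} ∫_{-1}^1 |v_n^m(x,y)| w(y) dy`. -/
noncomputable def cInf (n m : ℕ) : ℝ :=
  ⨆ x : Set.Icc (-1 : ℝ) 1, ∫ y in (-1 : ℝ)..1, |vpK n m x y| * chebW y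

/-!
At the nodes of order `n`, degrees `i` and `2n - i` alias: `p_{2n-i} = -p_i` for `0 < i < 2n`.
A filter `μ` on `[0, 2n)` with `μ_i + μ_{2n-i} = 1` therefore acts on the nodes like the projection
onto degrees below `n`, whose kernel `(π/n) ∑_{i<n} p_i(x_r) p_i(x_s)` is `δ_{r,s}` because the
Gauss–Chebyshev rule makes the square matrix `√(π/n) p_i(x_k)` orthogonal. So the scaling functions
are cardinal at the nodes, while Parseval followed by the same aliasing turns the Gram matrix
`(π/n)² ∑_{i<2n} μ_i² p_i p_i` into a sum over `i < n` with weights `μ_i² + μ_{2n-i}²`. The second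
formula evaluates the same integral by the `3n`-point Gauss–Chebyshev rule, which is exact since
the product of two scaling functions has degree less than `4n`; every third node belongs to the
order-`n` grid, and these contribute `δ_{r,s}`.
-/

section FiniteSums

lemma mul_sum_eq_ite_swap_of_card_eq {ι κ R : Type*} [DecidableEq ι] [DecidableEq κ]
    [CommSemiring R]
    {s : Finset ι} {t : Finset κ} (hcard : #s = #t) {c : R} {f : ι → κ → R}
    (hrows : ∀ i ∈ s, ∀ j ∈ s, c * ∑ k ∈ t, f i k * f j k = if i = j then 1 else 0)
    {k l : κ} (hk : k ∈ t) (hl : l ∈ t) :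
    c * ∑ i ∈ s, f i k * f i l = if k = l then 1 else 0 := by
  let A : Matrix s t R := Matrix.of fun i k ↦ f i k
  let B : Matrix t s R := Matrix.of fun k i ↦ c * f i k
  have hAB : A * B = 1 := by
    ext i j
    calc (A * B) i j = ∑ k ∈ t, f i k * (c * f j k) := sum_coe_sort t fun k ↦ f i k * (c * f j k)
      _ = c * ∑ k ∈ t, f i k * f j k := by simp only [mul_sum, mul_left_comm]
      _ = (1 : Matrix s s R) i j := by
        simp only [hrows i i.2 j j.2, Matrix.one_apply, Subtype.ext_iff]
  have hBA : B * A = 1 := (Matrix.mul_eq_one_comm_of_card_eq s t R (by simpa using hcard)).mp hAB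
  calc c * ∑ i ∈ s, f i k * f i l = ∑ i ∈ s, c * f i k * f i l := by simp only [mul_sum, mul_assoc]
    _ = (B * A) ⟨k, hk⟩ ⟨l, hl⟩ := (sum_coe_sort s fun i ↦ c * f i k * f i l).symm
    _ = if k = l then 1 else 0 := by simp only [hBA, Matrix.one_apply, Subtype.ext_iff]

lemma sum_range_two_mul_eq_sum_add_reflect {M : Type*} [AddCommMonoid M] {F : ℕ → M} {n : ℕ}
    (hn : F n = 0) (h2n : F (2 * n) = 0) :
    ∑ i ∈ range (2 * n), F i = ∑ i ∈ range n, (F i + F (2 * n - i)) := by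
  have hflip := sum_flip (n := n) fun j ↦ F (n + j)
  rw [sum_range_succ, sum_range_succ, Nat.sub_self, add_zero, hn, ← two_mul, h2n, add_zero,
    add_zero] at hflip
  rw [sum_add_distrib, two_mul, sum_range_add, ← hflip]
  congr 1
  refine sum_congr rfl fun i hi ↦ ?_
  rw [Nat.add_sub_assoc (mem_range.mp hi).le]

lemma sum_Icc_three_mul {M : Type*} [AddCommMonoid M] (F : ℕ → M) (n : ℕ) :
    ∑ k ∈ Icc 1 (3 * n), F k =
      ∑ k ∈ Icc 1 n, F (3 * k - 1) + ∑ k ∈ Icc 1 (2 * n), F (3 * k / 2) := by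
  induction n with
  | zero => simp
  | succ n ih =>
    rw [Nat.mul_add_one, Nat.mul_add_one]
    simp only [sum_Icc_succ_top (Nat.le_add_left 1 _), ih]
    rw [show 3 * (n + 1) - 1 = 3 * n + 1 + 1 by omega,
      show 3 * (2 * n + 1) / 2 = 3 * n + 1 by omega,
      show 3 * (2 * n + 1 + 1) / 2 = 3 * n + 2 + 1 by omega]
    abel

end FiniteSums

section Quadrature

open Polynomial.Chebyshev

lemma integral_mul_chebW (f : ℝ → ℝ) :
    ∫ x in (-1 : ℝ)..1, f x * chebW x = ∫ x, f x ∂measureT := by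
  simp [integral_measureT, chebW]

lemma integral_measureT_congr {f g : ℝ → ℝ} (h : Set.EqOn f g (Set.Icc (-1) 1)) :
    ∫ x, f x ∂measureT = ∫ x, g x ∂measureT := by
  rw [integral_measureT, integral_measureT]
  refine intervalIntegral.integral_congr fun x hx ↦ ?_
  rw [Set.uIcc_of_le (by norm_num)] at hx
  simp only [h hx]

lemma chebNode_mem_Icc (n k : ℕ) : chebNode n k ∈ Set.Icc (-1) 1 :=
  Real.cos_mem_Icc _

lemma sumZeroes_eq_sum_chebNode (n : ℕ) (P : Polynomial ℝ) :
    sumZeroes n P = π / n * ∑ k ∈ Icc 1 n, P.eval (chebNode n k) := by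
  rw [sumZeroes, ← Ico_add_one_right_eq_Icc, sum_Ico_eq_sum_range, Nat.add_sub_cancel]
  refine congrArg _ (sum_congr rfl fun i _ ↦ ?_)
  rw [chebNode]
  push_cast
  ring_nf

lemma integral_measureT_eq_sum_chebNode {n : ℕ} (hn : n ≠ 0) {f : ℝ → ℝ} {P : Polynomial ℝ}
    (hP : P.degree < 2 * n) (hf : Set.EqOn f (fun x ↦ P.eval x) (Set.Icc (-1) 1)) :
    ∫ x, f x ∂measureT = π / n * ∑ k ∈ Icc 1 n, f (chebNode n k) := by
  rw [integral_measureT_congr hf, integral_eq_sumZeroes hn hP, sumZeroes_eq_sum_chebNode]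
  exact congrArg _ (sum_congr rfl fun k _ ↦ (hf (chebNode_mem_Icc n k)).symm)

end Quadrature

section ChebyshevPolynomials

open Polynomial.Chebyshev

/-- The polynomial agreeing with `chebP i` on `[-1, 1]`; outside this interval `chebP i` is
constant on each side, because `arccos` is. -/
noncomputable def chebPoly (i : ℕ) : Polynomial ℝ :=
  √((if i = 0 then 1 else 2) / π) • T ℝ i

lemma degree_chebPoly_le (i : ℕ) : (chebPoly i).degree ≤ i :=
  (Polynomial.degree_smul_le _ _).trans (by simp [degree_T])

lemma chebP_eqOn_eval_chebPoly (i : ℕ) :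
    Set.EqOn (chebP i) (fun x ↦ (chebPoly i).eval x) (Set.Icc (-1) 1) := by
  intro x hx
  have hT := T_real_cos (Real.arccos x) i
  rw [Real.cos_arccos hx.1 hx.2] at hT
  by_cases hi : i = 0 <;> simp [chebP, chebPoly, hi, hT]

lemma continuous_chebP (i : ℕ) : Continuous (chebP i) := by
  unfold chebP
  split_ifs <;> fun_prop

lemma chebP_cos {i : ℕ} (hi : i ≠ 0) (θ : ℝ) :
    chebP i (Real.cos θ) = √(2 / π) * Real.cos (i * θ) := by
  rw [chebP_eqOn_eval_chebPoly i (Real.cos_mem_Icc θ)]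
  simp [chebPoly, hi, T_real_cos]

lemma integral_chebP_mul_chebP (i j : ℕ) :
    ∫ x, chebP i x * chebP j x ∂measureT = if i = j then 1 else 0 := by
  rw [integral_measureT_congr fun x hx ↦ congrArg₂ (· * ·) (chebP_eqOn_eval_chebPoly i hx)
    (chebP_eqOn_eval_chebPoly j hx)]
  have hscale (x : ℝ) : (chebPoly i).eval x * (chebPoly j).eval x =
      √((if i = 0 then 1 else 2) / π) * √((if j = 0 then 1 else 2) / π) *
        ((T ℝ i).eval x * (T ℝ j).eval x) := by
    simp only [chebPoly, Polynomial.eval_smul, smul_eq_mul]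
    ring
  simp_rw [hscale, integral_const_mul]
  rcases eq_or_ne i j with rfl | hij
  · rw [Real.mul_self_sqrt (by positivity), if_pos rfl]
    rcases eq_or_ne i 0 with rfl | hi
    · rw [Nat.cast_zero, integral_eval_T_real_mul_self_measureT_zero, if_pos rfl]
      field
    · rw [integral_T_real_mul_self_measureT_of_ne_zero hi, if_neg hi]
      field
  · rw [integral_eval_T_real_mul_eval_T_real_measureT_of_ne hij, mul_zero, if_neg hij]

lemma sum_chebNode_chebP_mul_chebP {n i j : ℕ} (hij : i + j < 2 * n) :
    π / n * ∑ k ∈ Icc 1 n, chebP i (chebNode n k) * chebP j (chebNode n k) =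
      if i = j then 1 else 0 := by
  have hdeg : (chebPoly i * chebPoly j).degree < 2 * n :=
    calc (chebPoly i * chebPoly j).degree ≤ i + j :=
          (Polynomial.degree_mul_le _ _).trans
            (add_le_add (degree_chebPoly_le i) (degree_chebPoly_le j))
      _ < 2 * n := mod_cast hij
  rw [← integral_chebP_mul_chebP, integral_measureT_eq_sum_chebNode (by omega) hdeg]
  intro x hx
  simp [chebP_eqOn_eval_chebPoly _ hx]

lemma sum_range_chebP_chebNode_mul_chebP_chebNode {n r s : ℕ} (hr : r ∈ Icc 1 n)
    (hs : s ∈ Icc 1 n) :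
    π / n * ∑ i ∈ range n, chebP i (chebNode n r) * chebP i (chebNode n s) =
      if r = s then 1 else 0 := by
  refine mul_sum_eq_ite_swap_of_card_eq (s := range n) (f := fun i k ↦ chebP i (chebNode n k))
    (by simp) (fun i hi j hj ↦ ?_) hr hs
  exact sum_chebNode_chebP_mul_chebP (by grind)

lemma chebP_two_mul_sub_chebNode {n i : ℕ} (hi : 0 < i) (hin : i < 2 * n) (k : ℕ) :
    chebP (2 * n - i) (chebNode n k) = -chebP i (chebNode n k) := by
  have hn : (n : ℝ) ≠ 0 := by norm_cast; omega
  rw [chebNode, chebP_cos (by omega), chebP_cos hi.ne', Nat.cast_sub hin.le]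
  set θ := (2 * (k : ℝ) - 1) * π / (2 * n) with hθ
  have hangle : ((2 * n : ℕ) - i : ℝ) * θ = (k : ℤ) * (2 * π) - (i * θ + π) := by
    rw [hθ]
    push_cast
    field
  rw [hangle, Real.cos_int_mul_two_pi_sub, Real.cos_add_pi, mul_neg]

lemma chebP_self_chebNode {n : ℕ} (hn : n ≠ 0) (k : ℕ) : chebP n (chebNode n k) = 0 := by
  have h := chebP_two_mul_sub_chebNode (Nat.pos_of_ne_zero hn) (by omega : n < 2 * n) k
  rw [show 2 * n - n = n by omega] at h
  exact self_eq_neg.mp h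

lemma chebNode_three_mul {k : ℕ} (hk : 1 ≤ k) (n : ℕ) :
    chebNode (3 * n) (3 * k - 1) = chebNode n k := by
  have hangle : (2 * ((3 * k - 1 : ℕ) : ℝ) - 1) * π = 3 * ((2 * (k : ℝ) - 1) * π) := by
    rw [Nat.cast_sub (by omega)]
    push_cast
    ring
  rw [chebNode, chebNode, hangle, Nat.cast_mul, Nat.cast_ofNat, mul_left_comm 2,
    mul_div_mul_left _ _ three_ne_zero]

end ChebyshevPolynomials

section FilteredKernel

open Polynomial.Chebyshev

/-- The Chebyshev kernel `∑_{i < N} μ_i p_i(x) p_i(y)` with filter coefficients `μ`, of which the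
Darboux and de la Vallée Poussin kernels are instances. -/
noncomputable def filteredKernel (μ : ℕ → ℝ) (N : ℕ) (x y : ℝ) : ℝ :=
  ∑ i ∈ range N, μ i * (chebP i x * chebP i y)

/-- The polynomial agreeing with `filteredKernel μ N u` on `[-1, 1]`. -/
noncomputable def filteredKernelPoly (μ : ℕ → ℝ) (N : ℕ) (u : ℝ) : Polynomial ℝ :=
  ∑ i ∈ range N, (μ i * chebP i u) • chebPoly i

lemma filteredKernel_eqOn_eval_filteredKernelPoly (μ : ℕ → ℝ) (N : ℕ) (u : ℝ) :
    Set.EqOn (filteredKernel μ N u) (fun x ↦ (filteredKernelPoly μ N u).eval x)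
      (Set.Icc (-1) 1) := by
  intro x hx
  simp [filteredKernel, filteredKernelPoly, Polynomial.eval_finsetSum,
    chebP_eqOn_eval_chebPoly _ hx, mul_assoc]

lemma degree_filteredKernelPoly_le (μ : ℕ → ℝ) (N : ℕ) (u : ℝ) :
    (filteredKernelPoly μ N u).degree ≤ N := by
  refine (Polynomial.degree_sum_le _ _).trans (Finset.sup_le fun i hi ↦ ?_)
  exact (Polynomial.degree_smul_le _ _).trans
    ((degree_chebPoly_le i).trans (mod_cast (mem_range.mp hi).le))

lemma integral_filteredKernel_mul_eq_sum_chebNode {N n : ℕ} (hNn : N < n) (μ ν : ℕ → ℝ)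
    (u v : ℝ) :
    ∫ x, filteredKernel μ N u x * filteredKernel ν N v x ∂measureT =
      π / n * ∑ k ∈ Icc 1 n,
        filteredKernel μ N u (chebNode n k) * filteredKernel ν N v (chebNode n k) := by
  have hdeg : (filteredKernelPoly μ N u * filteredKernelPoly ν N v).degree < 2 * n :=
    calc (filteredKernelPoly μ N u * filteredKernelPoly ν N v).degree ≤ N + N :=
          (Polynomial.degree_mul_le _ _).trans
            (add_le_add (degree_filteredKernelPoly_le μ N u) (degree_filteredKernelPoly_le ν N v))
      _ < 2 * n := mod_cast (by omega : N + N < 2 * n)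
  refine integral_measureT_eq_sum_chebNode (by omega) hdeg fun x hx ↦ ?_
  simp [filteredKernel_eqOn_eval_filteredKernelPoly _ _ _ hx]

lemma integral_filteredKernel_mul (μ ν : ℕ → ℝ) (N : ℕ) (u v : ℝ) :
    ∫ x, filteredKernel μ N u x * filteredKernel ν N v x ∂measureT =
      filteredKernel (μ * ν) N u v := by
  have hint (c : ℝ) (i j : ℕ) : Integrable (fun x ↦ c * (chebP i x * chebP j x)) measureT :=
    integrable_measureT
      (((continuous_chebP i).mul (continuous_chebP j)).const_mul c).continuousOn
  have hexpand (x : ℝ) : filteredKernel μ N u x * filteredKernel ν N v x =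
      ∑ i ∈ range N, ∑ j ∈ range N,
        μ i * chebP i u * (ν j * chebP j v) * (chebP i x * chebP j x) := by
    rw [filteredKernel, filteredKernel, sum_mul_sum]
    exact sum_congr rfl fun i _ ↦ sum_congr rfl fun j _ ↦ by ring
  simp_rw [hexpand]
  rw [integral_finsetSum _ fun i _ ↦ integrable_finsetSum _ fun j _ ↦ hint _ i j]
  refine sum_congr rfl fun i hi ↦ ?_
  rw [integral_finsetSum _ fun j _ ↦ hint _ i j]
  simp_rw [integral_const_mul, integral_chebP_mul_chebP, mul_ite, mul_one, mul_zero]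
  rw [sum_ite_eq, if_pos hi, Pi.mul_apply]
  ring

lemma filteredKernel_two_mul_chebNode {μ : ℕ → ℝ} {n : ℕ} (hμ : μ (2 * n) = 0) (r s : ℕ) :
    filteredKernel μ (2 * n) (chebNode n r) (chebNode n s) =
      ∑ i ∈ range n, (μ i + μ (2 * n - i)) *
        (chebP i (chebNode n r) * chebP i (chebNode n s)) := by
  rcases eq_or_ne n 0 with rfl | hn
  · simp [filteredKernel]
  rw [filteredKernel, sum_range_two_mul_eq_sum_add_reflect (by simp [chebP_self_chebNode hn])
    (by simp [hμ])]
  refine sum_congr rfl fun i hi ↦ ?_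
  rcases Nat.eq_zero_or_pos i with rfl | hi₀
  · simp [hμ]
  · have hin : i < 2 * n := by grind
    rw [chebP_two_mul_sub_chebNode hi₀ hin r, chebP_two_mul_sub_chebNode hi₀ hin s]
    ring

end FilteredKernel

section FilteredScal

variable {μ : ℕ → ℝ} {n r s : ℕ}

/-- The scaling function `(π/n) ∑_{i < 2n} μ_i p_i(x_k^n) p_i(x)` of a general filter `μ`; the
functions `scal n m k` are the case `μ = muC n m`. -/
noncomputable def filteredScal (μ : ℕ → ℝ) (n k : ℕ) (x : ℝ) : ℝ :=
  π / n * filteredKernel μ (2 * n) (chebNode n k) x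

lemma filteredScal_chebNode (hμ₀ : μ (2 * n) = 0) (hμ : ∀ i < n, μ i + μ (2 * n - i) = 1)
    (hr : r ∈ Icc 1 n) (hs : s ∈ Icc 1 n) :
    filteredScal μ n r (chebNode n s) = if r = s then 1 else 0 := by
  rw [filteredScal, filteredKernel_two_mul_chebNode hμ₀,
    ← sum_range_chebP_chebNode_mul_chebP_chebNode hr hs]
  refine congrArg _ (sum_congr rfl fun i hi ↦ ?_)
  rw [hμ i (mem_range.mp hi), one_mul]

lemma integral_filteredScal_mul (μ : ℕ → ℝ) (n r s : ℕ) :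
    ∫ x in (-1 : ℝ)..1, filteredScal μ n r x * filteredScal μ n s x * chebW x =
      (π / n) ^ 2 * ∫ x, filteredKernel μ (2 * n) (chebNode n r) x *
        filteredKernel μ (2 * n) (chebNode n s) x ∂Polynomial.Chebyshev.measureT := by
  rw [integral_mul_chebW, ← integral_const_mul]
  exact integral_congr_ae (.of_forall fun x ↦ by simp only [filteredScal]; ring)

lemma integral_filteredScal_mul_eq_sum_range (hμ₀ : μ (2 * n) = 0) (r s : ℕ) :
    ∫ x in (-1 : ℝ)..1, filteredScal μ n r x * filteredScal μ n s x * chebW x =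
      (π / n) ^ 2 * ∑ i ∈ range n, (μ i ^ 2 + μ (2 * n - i) ^ 2) *
        chebP i (chebNode n r) * chebP i (chebNode n s) := by
  rw [integral_filteredScal_mul, integral_filteredKernel_mul,
    filteredKernel_two_mul_chebNode (by simp [hμ₀])]
  simp only [Pi.mul_apply, ← sq, mul_assoc]

lemma integral_filteredScal_mul_eq_sum_chebNode (hn : n ≠ 0) (r s : ℕ) :
    ∫ x in (-1 : ℝ)..1, filteredScal μ n r x * filteredScal μ n s x * chebW x =
      π / (3 * n) * ∑ k ∈ Icc 1 (3 * n),
        filteredScal μ n r (chebNode (3 * n) k) * filteredScal μ n s (chebNode (3 * n) k) := by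
  rw [integral_filteredScal_mul,
    integral_filteredKernel_mul_eq_sum_chebNode (by omega : 2 * n < 3 * n), mul_left_comm, mul_sum]
  push_cast
  exact congrArg _ (sum_congr rfl fun k _ ↦ by simp only [filteredScal]; ring)

lemma integral_filteredScal_mul_eq_sum_yNode (hμ₀ : μ (2 * n) = 0)
    (hμ : ∀ i < n, μ i + μ (2 * n - i) = 1) (hr : r ∈ Icc 1 n) (hs : s ∈ Icc 1 n) :
    ∫ x in (-1 : ℝ)..1, filteredScal μ n r x * filteredScal μ n s x * chebW x =
      π / (3 * n) * ((if r = s then 1 else 0) +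
        ∑ k ∈ Icc 1 (2 * n), filteredScal μ n r (yNode n k) * filteredScal μ n s (yNode n k)) := by
  have hcoarse : ∑ k ∈ Icc 1 n, filteredScal μ n r (chebNode (3 * n) (3 * k - 1)) *
      filteredScal μ n s (chebNode (3 * n) (3 * k - 1)) = if r = s then 1 else 0 := by
    calc _ = ∑ k ∈ Icc 1 n, (if r = k then 1 else 0) * (if s = k then (1 : ℝ) else 0) :=
          sum_congr rfl fun k hk ↦ by
            rw [chebNode_three_mul (mem_Icc.mp hk).1, filteredScal_chebNode hμ₀ hμ hr hk,
              filteredScal_chebNode hμ₀ hμ hs hk]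
      _ = if r = s then 1 else 0 := by
        simp only [ite_mul, one_mul, zero_mul, sum_ite_eq, if_pos hr, eq_comm]
  rw [integral_filteredScal_mul_eq_sum_chebNode (by grind), sum_Icc_three_mul, hcoarse]
  rfl

theorem scal_gram_matrix_general (hμ₀ : μ (2 * n) = 0) (hμ : ∀ i < n, μ i + μ (2 * n - i) = 1)
    (hr : r ∈ Icc 1 n) (hs : s ∈ Icc 1 n) :
    (∫ x in (-1 : ℝ)..1, filteredScal μ n r x * filteredScal μ n s x * chebW x) =
        (π / n) ^ 2 * ∑ i ∈ range n, (μ i ^ 2 + μ (2 * n - i) ^ 2) *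
          chebP i (chebNode n r) * chebP i (chebNode n s) ∧
      (∫ x in (-1 : ℝ)..1, filteredScal μ n r x * filteredScal μ n s x * chebW x) =
        π / (3 * n) * ((if r = s then 1 else 0) + ∑ k ∈ Icc 1 (2 * n),
          filteredScal μ n r (yNode n k) * filteredScal μ n s (yNode n k)) :=
  ⟨integral_filteredScal_mul_eq_sum_range hμ₀ r s,
    integral_filteredScal_mul_eq_sum_yNode hμ₀ hμ hr hs⟩

end FilteredScal

section DeLaValleePoussin

variable {n m : ℕ}

lemma muC_eq_card_div (hm : 0 < m) (hmn : m ≤ n) (i : ℕ) :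
    muC n m i = #{r ∈ Icc (n - m) (n + m - 1) | i ≤ r} / (2 * m) := by
  have hm' : (m : ℝ) ≠ 0 := by positivity
  have hfilter : {r ∈ Icc (n - m) (n + m - 1) | i ≤ r} = Icc (max (n - m) i) (n + m - 1) := by
    grind
  rw [hfilter, Nat.card_Icc, eq_div_iff (by positivity), muC]
  split_ifs with hlow hmid
  · rw [show n + m - 1 + 1 - max (n - m) i = 2 * m by omega]
    push_cast
    ring
  · rw [show n + m - 1 + 1 - max (n - m) i = n + m - i by omega, Nat.cast_sub hmid.le]
    push_cast
    field
  · rw [show n + m - 1 + 1 - max (n - m) i = 0 by omega]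
    simp

lemma vpK_eq_filteredKernel (hm : 0 < m) (hmn : m ≤ n) (x y : ℝ) :
    vpK n m x y = filteredKernel (muC n m) (2 * n) x y := by
  have hswap : ∑ r ∈ Icc (n - m) (n + m - 1), darboux r x y =
      ∑ i ∈ range (2 * n), ∑ r ∈ Icc (n - m) (n + m - 1) with i ≤ r, chebP i x * chebP i y :=
    sum_comm' (by grind)
  rw [vpK, hswap, filteredKernel, mul_sum]
  refine sum_congr rfl fun i _ ↦ ?_
  rw [sum_const, nsmul_eq_mul, muC_eq_card_div hm hmn]
  ring

lemma scal_eq_filteredScal (hm : 0 < m) (hmn : m ≤ n) : scal n m = filteredScal (muC n m) n := by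
  funext k x
  rw [scal, filteredScal, vpK_eq_filteredKernel hm hmn]

lemma muC_of_add_le {i : ℕ} (hm : 0 < m) (hi : n + m ≤ i) : muC n m i = 0 := by
  rw [muC, if_neg (by omega), if_neg (by omega)]

lemma muC_of_sub_le_of_le_add {i : ℕ} (hm : 0 < m) (hmn : m ≤ n) (hlow : n - m ≤ i)
    (hhigh : i ≤ n + m) : muC n m i = (m + n - i) / (2 * m) := by
  have hm' : (m : ℝ) ≠ 0 := by positivity
  unfold muC
  split_ifs with h₁ h₂
  · rw [le_antisymm h₁ hlow, Nat.cast_sub hmn]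
    field
  · rfl
  · rw [le_antisymm hhigh (not_lt.mp h₂)]
    push_cast
    ring

lemma muC_add_muC_two_mul_sub {i : ℕ} (hm : 0 < m) (hmn : m ≤ n) (hi : i < n) :
    muC n m i + muC n m (2 * n - i) = 1 := by
  by_cases hlow : i ≤ n - m
  · rw [muC, if_pos hlow, muC_of_add_le hm (by omega), add_zero]
  · have hm' : (m : ℝ) ≠ 0 := by positivity
    rw [muC_of_sub_le_of_le_add hm hmn (by omega) (by omega),
      muC_of_sub_le_of_le_add hm hmn (by omega) (by omega), Nat.cast_sub (by omega)]
    push_cast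
    field

lemma muC_sq_add_muC_two_mul_sub_sq {i : ℕ} (hm : 0 < m) (hmn : m ≤ n) (hi : i < n) :
    muC n m i ^ 2 + muC n m (2 * n - i) ^ 2 = nuC n m i := by
  by_cases hlow : i ≤ n - m
  · rw [nuC, if_pos hlow, muC, if_pos hlow, muC_of_add_le hm (by omega)]
    norm_num
  · have hm' : (m : ℝ) ≠ 0 := by positivity
    rw [nuC, if_neg hlow, muC_of_sub_le_of_le_add hm hmn (by omega) (by omega),
      muC_of_sub_le_of_le_add hm hmn (by omega) (by omega), Nat.cast_sub (by omega)]
    push_cast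
    field

end DeLaValleePoussin

theorem scal_gram_matrix (n m : ℕ) (hm : 0 < m) (hmn : m < n)
    (r s : ℕ) (hr : r ∈ Finset.Icc 1 n) (hs : s ∈ Finset.Icc 1 n) :
    (∫ x in (-1 : ℝ)..1, scal n m r x * scal n m s x * chebW x) =
        (Real.pi / (n : ℝ)) ^ 2 *
          ∑ i ∈ Finset.range n, nuC n m i * chebP i (chebNode n r) * chebP i (chebNode n s) ∧
      (∫ x in (-1 : ℝ)..1, scal n m r x * scal n m s x * chebW x) =
        (Real.pi / (3 * (n : ℝ))) * ((if r = s then 1 else 0) +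
          ∑ k ∈ Finset.Icc 1 (2 * n), scal n m r (yNode n k) * scal n m s (yNode n k)) := by
  have hgram := scal_gram_matrix_general (muC_of_add_le hm (by omega))
    (fun i hi ↦ muC_add_muC_two_mul_sub hm hmn.le hi) hr hs
  rw [← scal_eq_filteredScal hm hmn.le] at hgram
  refine ⟨hgram.1.trans (congrArg _ (sum_congr rfl fun i hi ↦ ?_)), hgram.2⟩
  rw [muC_sq_add_muC_two_mul_sub_sq hm hmn.le (mem_range.mp hi)]
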